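/- Let d be a positive integer. The maximal integer sum of a multiset of natural numbers with all elements strictly less than d and no nonempty submultiset summing to 0 modulo d equals (d − 1)²: every such multiset has sum at most (d − 1)², and the multiset consisting of the element d − 1 with multiplicity d − 1 has no nonempty submultiset summing to 0 modulo d and has sum exactly (d − 1)². -/

import Mathlib

/-- A multiset of natural numbers is zero-sum free modulo `d` if no nonempty submultiset
has sum divisible by `d`. -/
def ZeroSumFreeMod (d : ℕ) (f : Multiset ℕ) : Prop :=
  ∀ g : Multiset ℕ, g ≤ f → g ≠ 0 → ¬ (d ∣ g.sum)

/-- The prefix sums of `l` outnumber the elements of `G`, so two of them agree; the segment between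
those two prefixes sums to zero. -/
theorem exists_infix_sum_eq_zero {G : Type*} [AddGroup G] [Finite G] (l : List G)
    (hl : Nat.card G ≤ l.length) : ∃ s, s <:+: l ∧ s ≠ [] ∧ s.sum = 0 := by
  let prefixSum (i : Fin (l.length + 1)) : G := (l.take i).sum
  obtain ⟨i, j, hij, hsum⟩ : ∃ i j, i < j ∧ prefixSum i = prefixSum j := by
    by_contra! hne
    have hcard := Nat.card_le_card_of_injective prefixSum (Function.Injective.of_lt_imp_ne hne)
    rw [Nat.card_fin] at hcard
    omega
  refine ⟨(l.take j).drop i, ?_, ?_, ?_⟩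
  · exact (List.drop_suffix _ _).isInfix.trans (List.take_prefix _ _).isInfix
  · rw [ne_eq, List.drop_eq_nil_iff, List.length_take]
    omega
  · have hsplit : (l.take i).sum = (l.take i).sum + ((l.take j).drop i).sum :=
      calc (l.take i).sum = (l.take j).sum := hsum
        _ = ((l.take j).take i).sum + ((l.take j).drop i).sum :=
          (List.sum_take_add_sum_drop _ _).symm
        _ = (l.take i).sum + ((l.take j).drop i).sum := by
          rw [List.take_take, min_eq_left (Fin.le_def.mp hij.le)]
    exact left_eq_add.mp hsplit

theorem ZeroSumFreeMod.card_lt {d : ℕ} {f : Multiset ℕ} (hf : ZeroSumFreeMod d f) (hd : 0 < d) :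
    f.card < d := by
  have : NeZero d := ⟨hd.ne'⟩
  induction f using Quotient.inductionOn with | h l =>
  by_contra! hle
  obtain ⟨_, hinfix, hne, hsum⟩ := exists_infix_sum_eq_zero (l.map (Nat.cast : ℕ → ZMod d))
    (by simpa using hle)
  obtain ⟨s, hs, rfl⟩ := List.infix_map_iff.mp hinfix
  refine hf s hs.sublist.subperm (by simpa using hne) ?_
  rwa [Multiset.sum_coe, ← ZMod.natCast_eq_zero_iff, Nat.cast_list_sum]

theorem ZeroSumFreeMod.sum_le {d a : ℕ} {f : Multiset ℕ} (hf : ZeroSumFreeMod d f) (hd : 0 < d)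
    (ha : ∀ x ∈ f, x ≤ a) : f.sum ≤ (d - 1) * a :=
  calc f.sum ≤ f.card * a := Multiset.sum_le_card_nsmul f a ha
    _ ≤ (d - 1) * a := Nat.mul_le_mul_right a (Nat.le_sub_one_of_lt (hf.card_lt hd))

theorem zeroSumFreeMod_replicate {d a n : ℕ} (ha : d.Coprime a) (hn : n < d) :
    ZeroSumFreeMod d (Multiset.replicate n a) := by
  intro g hg hne hdvd
  obtain ⟨m, hm, rfl⟩ := Multiset.le_replicate_iff.mp hg
  rw [Multiset.sum_replicate, smul_eq_mul] at hdvd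
  have hm_zero : m = 0 := Nat.eq_zero_of_dvd_of_lt (ha.dvd_of_dvd_mul_right hdvd) (hm.trans_lt hn)
  exact hne (by rw [hm_zero, Multiset.replicate_zero])

/-- The maximal integer sum of a multiset of naturals with all elements `< d` and no
nonempty submultiset summing to `0` mod `d` equals `(d-1)²`: every such multiset has sum
at most `(d-1)²`, and the multiset of `d-1` copies of `d-1` is zero-sum free mod `d`
with sum exactly `(d-1)²`. -/
theorem max_sum_zeroSumFreeMod (d : ℕ) (hd : 0 < d) :
    (∀ f : Multiset ℕ, (∀ a ∈ f, a < d) → ZeroSumFreeMod d f → f.sum ≤ (d - 1) ^ 2) ∧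
    ZeroSumFreeMod d (Multiset.replicate (d - 1) (d - 1)) ∧
    (Multiset.replicate (d - 1) (d - 1)).sum = (d - 1) ^ 2 := by
  refine ⟨fun f hlt hf ↦ ?_, ?_, ?_⟩
  · rw [sq]
    exact hf.sum_le hd fun x hx ↦ Nat.le_sub_one_of_lt (hlt x hx)
  · have coprime_pred : d.Coprime (d - 1) :=
      (Nat.coprime_self_sub_right hd).mpr (Nat.coprime_one_right d)
    exact zeroSumFreeMod_replicate coprime_pred (Nat.sub_one_lt_of_lt hd)
  · rw [Multiset.sum_replicate, smul_eq_mul, sq]
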